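/- arXiv:2003.06865 — 2 statements merged into one kernel-verified Lean document; each statement's English description precedes it below -/
import Mathlib

section
/- Let X be a simplicial set, R a ring, and T : Δ/X ⥤ Mod R a covariant local system, i.e. a functor sending every morphism of Δ/X to an isomorphism. Let T^{-1} : (Δ/X)ᵒᵖ ⥤ Mod R be the functor with T^{-1}(x) = T(x) on objects and T^{-1}(θ) = (T(θ))^{-1} on morphisms. Then for every n ≥ 0 there is an isomorphism between the n-th right derived functor of the limit over Δ/X applied to T and the n-th right derived functor of the limit over (Δ/X)ᵒᵖ applied to T^{-1}: lim^n_{Δ/X} T ≅ lim^n_{(Δ/X)ᵒᵖ} T^{-1}; equivalently, H^n_GZ(X, T) ≅ H^n((Δ/X)ᵒᵖ, T^{-1}). -/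
/-!
STATEMENT 12: For a simplicial set `X`, a ring `R` and a covariant local system
`T : Δ/X ⥤ Mod R` (a functor inverting all morphisms), with inverse contravariant system
`T⁻¹ : (Δ/X)ᵒᵖ ⥤ Mod R`, the `n`-th right derived functor of the limit over `Δ/X`
applied to `T` is isomorphic to the `n`-th right derived functor of the limit over
`(Δ/X)ᵒᵖ` applied to `T⁻¹`:  `lim^n_{Δ/X} T ≅ lim^n_{(Δ/X)ᵒᵖ} T⁻¹`.
-/

open CategoryTheory CategoryTheory.Limits Opposite

/-- The simplex category `Δ/X` of a simplicial set `X`, realized as the opposite of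
the category of elements of `X`. -/
abbrev SimplexCat (X : SSet.{0}) : Type := X.Elementsᵒᵖ

/-- The inverse of a functor inverting all morphisms: it has the same values on objects,
and sends a morphism `θ` to `(T(θ))⁻¹`. -/
noncomputable def invFunctor {C : Type*} [Category C] {𝒜 : Type*} [Category 𝒜]
    (T : C ⥤ 𝒜) (h : ∀ {x y : C} (θ : x ⟶ y), IsIso (T.map θ)) : Cᵒᵖ ⥤ 𝒜 where
  obj x := T.obj x.unop
  map {x y} θ := haveI := h θ.unop; inv (T.map θ.unop)
  map_id x := by simp
  map_comp {x y z} θ θ' := by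
    haveI := h θ.unop; haveI := h θ'.unop; haveI := h (θ'.unop ≫ θ.unop)
    dsimp
    apply IsIso.inv_eq_of_hom_inv_id
    rw [T.map_comp]
    simp

instance limAdditive {J : Type*} [Category J] {𝒜 : Type*} [Category 𝒜]
    [Limits.HasLimitsOfShape J 𝒜] [Preadditive 𝒜] :
    (Limits.lim (J := J) (C := 𝒜)).Additive where

open CategoryTheory CategoryTheory.Limits Opposite

section abstractPart
universe v1 u1 v2 u2
variable {A : Type u1} [Category.{v1} A] [Abelian A] {B : Type u2} [Category.{v2} B] [Abelian B]

theorem homology_shift_step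
    (Φ : A ⥤ CochainComplex B ℕ) [Φ.PreservesZeroMorphisms]
    (hΦ : ∀ S : ShortComplex A, S.ShortExact → (S.map Φ).ShortExact)
    (hI : ∀ I : A, Injective I → ∀ n, IsZero ((Φ.obj I).homology (n + 1)))
    (Z J : ℕ → A) (hJ : ∀ k, Injective (J k)) (i : ∀ k, Z k ⟶ J k) (p : ∀ k, J k ⟶ Z (k + 1))
    (w : ∀ k, i k ≫ p k = 0) (hS : ∀ k, (ShortComplex.mk (i k) (p k) (w k)).ShortExact) (m : ℕ) :
    ∀ k, Nonempty ((Φ.obj (Z k)).homology (m + 1) ≅ (Φ.obj (Z (k + m))).homology 1) := by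
  induction m with
  | zero => intro k; exact ⟨Iso.refl _⟩
  | succ m ih =>
    intro k
    obtain ⟨e⟩ := ih (k + 1)
    have e' := (hΦ _ (hS k)).δIso (m + 1) (m + 1 + 1) rfl (hI _ (hJ k) m) (hI _ (hJ k) (m + 1))
    refine ⟨e'.symm ≪≫ e ≪≫ eqToIso ?_⟩
    rw [Nat.add_right_comm k 1 m]; rfl

theorem rightDerived_iso_homology [EnoughInjectives A] (G : A ⥤ B) [G.Additive]
    [PreservesFiniteLimits G]
    (Φ : A ⥤ CochainComplex B ℕ) [Φ.PreservesZeroMorphisms]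
    (hΦ : ∀ S : ShortComplex A, S.ShortExact → (S.map Φ).ShortExact)
    (e : G ≅ Φ ⋙ HomologicalComplex.homologyFunctor B (ComplexShape.up ℕ) 0)
    (hI : ∀ I : A, Injective I → ∀ n, IsZero ((Φ.obj I).homology (n + 1)))
    (X : A) (n : ℕ) :
    Nonempty ((G.rightDerived n).obj X ≅ (Φ.obj X).homology n) := by
  cases n with
  | zero => exact ⟨G.rightDerivedZeroIsoSelf.app X ≪≫ e.app X⟩
  | succ n =>
    let P : InjectiveResolution X := (HasInjectiveResolution.out (Z := X)).some
    let J := P.cocomplex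
    have w : ∀ k, J.iCycles k ≫ J.toCycles k (k + 1) = 0 := by
      intro k
      rw [← cancel_mono (J.iCycles (k + 1))]
      simp
    have hS : ∀ k, (ShortComplex.mk (J.iCycles k) (J.toCycles k (k + 1)) (w k)).ShortExact := by
      intro k
      have : Epi (J.toCycles k (k + 1)) := by
        have h := P.cocomplex_exactAt_succ k
        rw [HomologicalComplex.exactAt_iff_isZero_homology] at h
        have : IsZero (J.homology (k+1)) := h
        have h2 := J.homologyIsCokernel k (k + 1) (by simp)
        exact Preadditive.epi_of_isZero_cokernel' _ h2 this
      refine { exact := ?_ }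
      apply ShortComplex.exact_of_f_is_kernel
      refine KernelFork.IsLimit.ofι' _ _ (fun {W} f hf => ⟨J.liftCycles f (k + 1) (by simp) ?_, ?_⟩)
      · have := hf =≫ J.iCycles (k + 1)
        simpa using this
      · simp
    obtain ⟨s⟩ := homology_shift_step Φ hΦ hI (fun k => J.cycles k) (fun k => J.X k)
      (fun k => P.injective k) _ _ w hS n 0
    have h0 : X ≅ J.cycles 0 :=
      P.isLimitKernelFork.conePointUniqueUpToIso (J.cyclesIsKernel 0 1 (by simp))
    have e1 := (HomologicalComplex.homologyFunctor B (ComplexShape.up ℕ) (n + 1)).mapIso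
      (Φ.mapIso h0)
    rw [Nat.zero_add] at s
    refine ⟨P.isoRightDerivedObj G (n + 1) ≪≫ ?_ ≪≫ s.symm ≪≫ e1.symm⟩
    let K := (G.mapHomologicalComplex (ComplexShape.up ℕ)).obj J
    have hE := hΦ _ (hS n)
    let δ := hE.δ 0 1 rfl
    have hepi : Epi δ := hE.epi_δ 0 1 rfl (hI _ (P.injective n) 0)
    have hex := hE.homology_exact₃ 0 1 rfl
    have hi0 := KernelFork.mapIsLimit _ (J.cyclesIsKernel (n + 1) (n + 2) (by simp)) G
    have wi : G.map (J.iCycles (n + 1)) ≫ G.map (J.d (n + 1) (n + 2)) = 0 := by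
      rw [← G.map_comp]; simp
    have hi : IsLimit (KernelFork.ofι (G.map (J.iCycles (n + 1))) wi) := hi0
    have lift_eq : ∀ (h : G.map (J.d n (n+1)) ≫ G.map (J.d (n + 1) (n + 2)) = 0),
        hi.lift (KernelFork.ofι (G.map (J.d n (n + 1))) h) = G.map (J.toCycles n (n + 1)) := by
      intro h
      apply Fork.IsLimit.hom_ext hi
      refine (hi.fac _ WalkingParallelPair.zero).trans ?_
      simp [← G.map_comp]
    have wpi : G.map (J.toCycles n (n + 1)) ≫ e.hom.app _ ≫ δ = 0 := by
      have := e.hom.naturality_assoc (J.toCycles n (n + 1)) δ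
      rw [this]
      have h2 := hE.comp_δ 0 1 rfl
      erw [h2, comp_zero]
    haveI hepi2 : Epi (e.hom.app (J.cycles (n + 1)) ≫ δ) := epi_comp' inferInstance hepi
    have hpi : IsColimit (CokernelCofork.ofπ (e.hom.app (J.cycles (n + 1)) ≫ δ) wpi) := by
      refine CokernelCofork.IsColimit.ofπ' (e.hom.app (J.cycles (n + 1)) ≫ δ) _ (fun {W} f hf => ?_)
      have h3 : HomologicalComplex.homologyMap (Φ.map (J.toCycles n (n+1))) 0 ≫
          e.inv.app _ ≫ f = 0 := by
        have := e.inv.naturality_assoc (J.toCycles n (n + 1)) f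
        exact this.trans ((congrArg (e.inv.app _ ≫ ·) hf).trans comp_zero)
      refine ⟨hex.desc (e.inv.app _ ≫ f) h3, ?_⟩
      have := hex.g_desc (e.inv.app _ ≫ f) h3
      exact (Category.assoc _ _ _).trans
        ((congrArg (e.hom.app (J.cycles (n + 1)) ≫ ·) this).trans
          (e.hom_inv_id_app_assoc (J.cycles (n + 1)) f))
    let L : (K.sc' n (n + 1) (n + 2)).LeftHomologyData :=
      { K := G.obj (J.cycles (n + 1))
        H := (Φ.obj (J.cycles n)).homology 1
        i := G.map (J.iCycles (n + 1))
        π := e.hom.app _ ≫ δ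
        wi := wi
        hi := hi
        wπ := by
          have := lift_eq (by rw [← G.map_comp]; simp)
          erw [this]; exact wpi
        hπ := by
          have := lift_eq (by rw [← G.map_comp]; simp)
          refine CokernelCofork.IsColimit.ofπ' (e.hom.app (J.cycles (n + 1)) ≫ δ) _ (fun {W} f hf => ?_)
          have hf' : G.map (J.toCycles n (n + 1)) ≫ f = 0 := by
            erw [this] at hf; exact hf
          exact ⟨hpi.desc (CokernelCofork.ofπ f hf'), hpi.fac (CokernelCofork.ofπ f hf') WalkingParallelPair.one⟩ }
    exact K.homologyIsoSc' n (n + 1) (n + 2) (by simp) (by simp) ≪≫ L.homologyIso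

end abstractPart

open CategoryTheory CategoryTheory.Limits Opposite

section barPart
variable {R : Type} [Ring R] {J : Type} [Category.{0} J]

theorem zero_le_len {n : ℕ} (i : Fin (n + 1)) : (0 : Fin (n + 1)) ≤ i := Fin.zero_le i

/-- restriction of a simplex -/
abbrev resSimp {m n : SimplexCategory} (θ : m ⟶ n) (σ : Fin (n.len + 1) ⥤ Jᵒᵖ) :
    Fin (m.len + 1) ⥤ Jᵒᵖ := θ.toOrderHom.monotone.functor ⋙ σ

theorem map_thin (T : J ⥤ ModuleCat.{0} R) {n : ℕ} (σ : Fin (n + 1) ⥤ Jᵒᵖ) {i j k : Fin (n + 1)}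
    (a : i ⟶ j) (b : j ⟶ k) (c : i ⟶ k) (x : T.obj (unop (σ.obj k))) :
    T.map (σ.map c).unop x = T.map (σ.map a).unop (T.map (σ.map b).unop x) := by
  rw [← ModuleCat.comp_apply, ← T.map_comp, ← unop_comp, ← σ.map_comp]
  rfl

theorem hom_sum_zsmul_apply {M N : ModuleCat.{0} R} {k : ℕ} (c : Fin k → ℤ)
    (φ : Fin k → (M ⟶ N)) (x : M) :
    (∑ i, c i • φ i).hom x = ∑ i, c i • (φ i).hom x := by
  simp [ModuleCat.hom_sum]

/-- the bar cosimplicial module -/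
def barObj (T : J ⥤ ModuleCat.{0} R) : CosimplicialObject (ModuleCat.{0} R) where
  obj n := ModuleCat.of R (∀ σ : Fin (n.len + 1) ⥤ Jᵒᵖ, T.obj (unop (σ.obj 0)))
  map {m n} θ := ModuleCat.ofHom (LinearMap.pi fun σ =>
    (T.map (σ.map (homOfLE (zero_le_len (θ.toOrderHom 0)))).unop).hom ∘ₗ
      LinearMap.proj (resSimp θ σ))
  map_id n := by
    ext f σ
    change T.map (σ.map (𝟙 _)).unop (f σ) = f σ
    simp
  map_comp {l m n} θ ψ := by
    ext f σ
    exact map_thin T σ _ _ _ (f (resSimp θ (resSimp ψ σ)))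

theorem barObj_map_apply (T : J ⥤ ModuleCat.{0} R) {m n : SimplexCategory} (θ : m ⟶ n)
    (f : ∀ σ : Fin (m.len + 1) ⥤ Jᵒᵖ, T.obj (unop (σ.obj 0))) (σ : Fin (n.len + 1) ⥤ Jᵒᵖ) :
    (show ∀ σ : Fin (n.len + 1) ⥤ Jᵒᵖ, T.obj (unop (σ.obj 0)) from
      ((barObj T).map θ).hom f) σ =
      T.map (σ.map (homOfLE (zero_le_len (θ.toOrderHom 0)))).unop (f (resSimp θ σ)) := rfl

/-- functoriality -/
def barMap {S T : J ⥤ ModuleCat.{0} R} (α : S ⟶ T) : barObj S ⟶ barObj T where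
  app n := ModuleCat.ofHom (LinearMap.pi fun σ => (α.app _).hom ∘ₗ LinearMap.proj σ)
  naturality m n θ := by
    ext f
    funext σ
    change α.app _ (S.map _ (f (resSimp θ σ))) = T.map _ (α.app _ (f (resSimp θ σ)))
    exact NatTrans.naturality_apply α _ _

variable (R J) in
/-- the bar complex -/
def barCx : (J ⥤ ModuleCat.{0} R) ⥤ CochainComplex (ModuleCat.{0} R) ℕ :=
  { obj := fun T => barObj T
    map := fun α => barMap α
    map_id := fun _ => rfl
    map_comp := fun _ _ => rfl : (J ⥤ ModuleCat.{0} R) ⥤ CosimplicialObject (ModuleCat.{0} R) } ⋙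
  AlgebraicTopology.alternatingCofaceMapComplex _

/-- the underlying module -/
abbrev BarX (T : J ⥤ ModuleCat.{0} R) (n : ℕ) : Type :=
  ∀ σ : Fin (n + 1) ⥤ Jᵒᵖ, T.obj (unop (σ.obj 0))

theorem barCx_X (T : J ⥤ ModuleCat.{0} R) (n : ℕ) :
    ((barCx R J).obj T).X n = ModuleCat.of R (BarX T n) := rfl

/-- faces of simplices -/
abbrev face {n : ℕ} (i : Fin (n + 2)) (σ : Fin (n + 2) ⥤ Jᵒᵖ) : Fin (n + 1) ⥤ Jᵒᵖ :=
  (Fin.strictMono_succAbove i).monotone.functor ⋙ σ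

theorem barCx_d (T : J ⥤ ModuleCat.{0} R) (n : ℕ) (f : BarX T n) (σ : Fin (n + 2) ⥤ Jᵒᵖ) :
    (show BarX T (n + 1) from (((barCx R J).obj T).d n (n + 1)).hom f) σ =
      ∑ i : Fin (n + 2), (-1 : ℤ) ^ (i : ℕ) •
        T.map (σ.map (homOfLE (zero_le_len (i.succAbove 0)))).unop (f (face i σ)) := by
  have this : ((barCx R J).obj T).d n (n + 1) =
      AlgebraicTopology.AlternatingCofaceMapComplex.objD (barObj T) n :=
    CochainComplex.of_d (fun n => (barObj T).obj (SimplexCategory.mk n)) _ n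
  have h1 := congrArg (fun φ => (show BarX T (n + 1) from ModuleCat.Hom.hom φ f) σ) this
  refine h1.trans ?_
  have h2 := hom_sum_zsmul_apply (fun i : Fin (n + 2) => (-1 : ℤ) ^ (i : ℕ))
    (fun i : Fin (n + 2) => CosimplicialObject.δ (barObj T) i) f
  refine (congrArg (fun g => (show BarX T (n + 1) from g) σ) h2).trans ?_
  refine (Finset.sum_apply (M := fun σ : Fin (n + 2) ⥤ Jᵒᵖ => T.obj (unop (σ.obj 0)))
    σ Finset.univ _).trans ?_
  rfl

theorem barCx_map (S T : J ⥤ ModuleCat.{0} R) (α : S ⟶ T) (n : ℕ) (f : BarX S n)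
    (σ : Fin (n + 1) ⥤ Jᵒᵖ) :
    (show BarX T n from (((barCx R J).map α).f n).hom f) σ = α.app _ (f σ) := rfl

theorem BarX.eqTo (T : J ⥤ ModuleCat.{0} R) {n : ℕ} (f : BarX T n) {σ τ : Fin (n + 1) ⥤ Jᵒᵖ}
    (h : σ = τ) : f τ = T.map (eqToHom (by rw [h])) (f σ) := by
  subst h; simp

instance : (barCx R J).PreservesZeroMorphisms where
  map_zero S T := by
    ext n f
    rfl

theorem barCx_shortExact (S : ShortComplex (J ⥤ ModuleCat.{0} R)) (hS : S.ShortExact) :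
    (S.map (barCx R J)).ShortExact := by
  have hx : ∀ x : J, (S.map ((evaluation J (ModuleCat.{0} R)).obj x)).ShortExact := fun x =>
    hS.map_of_exact _
  apply HomologicalComplex.shortExact_of_degreewise_shortExact
  intro n
  refine { exact := ?_, mono_f := ?_, epi_g := ?_ }
  · rw [ShortComplex.moduleCat_exact_iff]
    intro (f : BarX S.X₂ n) hf
    have h1 : ∀ σ : Fin (n + 1) ⥤ Jᵒᵖ, S.g.app _ (f σ) = 0 := fun σ =>
      congrFun (show (_ : BarX S.X₃ n) = 0 from hf) σ
    have h2 : ∀ σ : Fin (n + 1) ⥤ Jᵒᵖ, ∃ y, S.f.app (unop (σ.obj 0)) y = f σ := fun σ =>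
      (ShortComplex.moduleCat_exact_iff _).1 (hx (unop (σ.obj 0))).exact (f σ) (h1 σ)
    choose g hg using h2
    exact ⟨g, funext hg⟩
  · rw [ModuleCat.mono_iff_injective]
    intro (f : BarX S.X₁ n) (g : BarX S.X₁ n) hfg
    funext σ
    have := (hx (unop (σ.obj 0))).mono_f
    rw [ModuleCat.mono_iff_injective] at this
    exact this (congrFun (show (_ : BarX S.X₂ n) = _ from hfg) σ)
  · rw [ModuleCat.epi_iff_surjective]
    intro (f : BarX S.X₃ n)
    have h2 : ∀ σ : Fin (n + 1) ⥤ Jᵒᵖ, ∃ y, S.g.app (unop (σ.obj 0)) y = f σ := fun σ => by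
      have := (hx (unop (σ.obj 0))).epi_g
      rw [ModuleCat.epi_iff_surjective] at this
      exact this (f σ)
    choose g hg using h2
    exact ⟨g, funext hg⟩

end barPart

open CategoryTheory CategoryTheory.Limits Opposite

section barPart2
variable {R : Type} [Ring R] {J : Type} [Category.{0} J]

theorem barCx_d_zero_iff (T : J ⥤ ModuleCat.{0} R) (x : BarX T 0)
    (hx : (((barCx R J).obj T).d 0 1).hom x = 0) {j k : J} (u : j ⟶ k) :
    T.map u (x (ComposableArrows.mk₀ (op j))) = x (ComposableArrows.mk₀ (op k)) := by
  have h := barCx_d T 0 x (ComposableArrows.mk₁ u.op)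
  rw [Fin.sum_univ_two] at h
  have h0 := BarX.eqTo T x (σ := ComposableArrows.mk₀ (op j))
    (τ := face 0 (ComposableArrows.mk₁ u.op)) (ComposableArrows.ext₀ rfl)
  have h1 := BarX.eqTo T x (σ := ComposableArrows.mk₀ (op k))
    (τ := face 1 (ComposableArrows.mk₁ u.op)) (ComposableArrows.ext₀ rfl)
  have h0' : x (face 0 (ComposableArrows.mk₁ u.op)) = x (ComposableArrows.mk₀ (op j)) :=
    h0.trans (by erw [T.map_id]; rfl)
  have h1' : x (face 1 (ComposableArrows.mk₁ u.op)) = x (ComposableArrows.mk₀ (op k)) :=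
    h1.trans (by erw [T.map_id]; rfl)
  rw [h0', h1'] at h
  have h2 := (congrFun (show (_ : BarX T 1) = 0 from hx) (ComposableArrows.mk₁ u.op)).symm.trans h
  have h3 : (0 : T.obj k) = T.map u (show T.obj j from x (ComposableArrows.mk₀ (op j))) -
      (show T.obj k from x (ComposableArrows.mk₀ (op k))) := by
    refine h2.trans ?_
    rw [sub_eq_add_neg]
    refine congrArg₂ (· + ·) ?_ ?_
    · simp; rfl
    · simp
      erw [T.map_id]; rfl
  exact (sub_eq_zero.1 h3.symm)

theorem barCx_d_zero_of (T : J ⥤ ModuleCat.{0} R) (x : BarX T 0)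
    (hx : ∀ (σ : Fin 2 ⥤ Jᵒᵖ), T.map (σ.map (homOfLE (zero_le_len 1))).unop
      (x (face 0 σ)) = x (face 1 σ)) :
    (((barCx R J).obj T).d 0 1).hom x = 0 := by
  refine funext (f := (show BarX T 1 from _)) (g := 0) fun σ => ?_
  refine (barCx_d T 0 x σ).trans ?_
  rw [Fin.sum_univ_two]
  have h1 : T.map (σ.map (homOfLE (zero_le_len ((1 : Fin 2).succAbove 0)))).unop (x (face 1 σ)) = x (face 1 σ) := by
    have : σ.map (homOfLE (zero_le_len ((1 : Fin 2).succAbove 0))) = 𝟙 _ := σ.map_id _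
    rw [this]
    erw [T.map_id]; rfl
  rw [h1]
  have h0 : T.map (σ.map (homOfLE (zero_le_len ((0 : Fin 2).succAbove 0)))).unop (x (face 0 σ)) =
      x (face 1 σ) := hx σ
  refine (congrArg₂ (fun a b : T.obj (unop (σ.obj 0)) => ((-1 : ℤ) ^ 0) • a + ((-1 : ℤ) ^ 1) • b)
    h0 (rfl : x (face 1 σ) = _)).trans ?_
  exact (by intro y; simp : ∀ y : T.obj (unop (σ.obj 0)),
    ((-1 : ℤ) ^ 0) • y + ((-1 : ℤ) ^ 1) • y = 0) _

/-- augmentation -/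
noncomputable def limToBar (T : J ⥤ ModuleCat.{0} R) : limit T ⟶ ((barCx R J).obj T).X 0 :=
  ModuleCat.ofHom (LinearMap.pi (φ := fun σ : Fin 1 ⥤ Jᵒᵖ => T.obj (unop (σ.obj 0)))
    fun σ => (limit.π T (unop (σ.obj 0))).hom)

theorem limToBar_d (T : J ⥤ ModuleCat.{0} R) : limToBar T ≫ ((barCx R J).obj T).d 0 1 = 0 := by
  ext y
  refine barCx_d_zero_of T _ fun σ => ?_
  have h := limit.w T (σ.map (homOfLE (zero_le_len 1))).unop
  exact congrArg (fun φ => ModuleCat.Hom.hom φ y) h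

instance (T : J ⥤ ModuleCat.{0} R) : Mono (limToBar T) := by
  refine ⟨fun {Z} g h hgh => limit.hom_ext fun j => ?_⟩
  ext z
  have := congrArg (fun φ => ModuleCat.Hom.hom φ z) hgh
  exact congrFun (show (_ : BarX T 0) = _ from this) (ComposableArrows.mk₀ (op j))

theorem limToBar_exact (T : J ⥤ ModuleCat.{0} R) :
    (ShortComplex.mk _ _ (limToBar_d T)).Exact := by
  rw [ShortComplex.moduleCat_exact_iff]
  intro (x : BarX T 0) hx
  let c : Cone T :=
    { pt := ModuleCat.of R R
      π := { app := fun j => ModuleCat.ofHom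
              (LinearMap.toSpanSingleton R _ (x (ComposableArrows.mk₀ (op j))))
             naturality := fun j k u => by
              ext
              have h : T.map u (x (ComposableArrows.mk₀ (op j))) = x (ComposableArrows.mk₀ (op k)) :=
                barCx_d_zero_iff T x hx u
              change (1 : R) • (show T.obj k from x (ComposableArrows.mk₀ (op k))) =
                T.map u ((1 : R) • (show T.obj j from x (ComposableArrows.mk₀ (op j))))
              rw [one_smul, one_smul]
              exact h.symm } }
  refine ⟨(limit.lift T c).hom (1 : R), ?_⟩
  refine funext (f := (show BarX T 0 from _)) (g := x) fun σ => ?_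
  obtain ⟨X, rfl⟩ := ComposableArrows.mk₀_surjective σ
  have h := congrArg (fun φ => ModuleCat.Hom.hom φ (1 : R)) (limit.lift_π c (unop X))
  refine h.trans ?_
  exact one_smul R _

/-- augmentation to homology -/
noncomputable def limToHom : (lim : (J ⥤ ModuleCat.{0} R) ⥤ ModuleCat.{0} R) ⟶
    barCx R J ⋙ HomologicalComplex.homologyFunctor _ (ComplexShape.up ℕ) 0 where
  app T := ((barCx R J).obj T).liftCycles (limToBar T) 1 (by simp) (limToBar_d T) ≫
    ((barCx R J).obj T).homologyπ 0
  naturality S T α := by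
    have h : lim.map α ≫ limToBar T = limToBar S ≫ ((barCx R J).map α).f 0 := by
      ext y
      refine funext (f := (show BarX T 0 from _)) (g := (show BarX T 0 from _)) fun σ => ?_
      exact congrArg (fun φ => ModuleCat.Hom.hom φ y) (limMap_π α (unop (σ.obj 0)))
    have h2 : lim.map α ≫ ((barCx R J).obj T).liftCycles (limToBar T) 1 (by simp) (limToBar_d T) =
        ((barCx R J).obj S).liftCycles (limToBar S) 1 (by simp) (limToBar_d S) ≫
        HomologicalComplex.cyclesMap ((barCx R J).map α) 0 := by
      refine (cancel_mono (HomologicalComplex.iCycles _ 0)).1 ?_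
      rw [Category.assoc, HomologicalComplex.liftCycles_i, Category.assoc,
        HomologicalComplex.cyclesMap_i, ← Category.assoc, HomologicalComplex.liftCycles_i]
      exact h
    refine (Category.assoc _ _ _).symm.trans ?_
    refine (congrArg (· ≫ ((barCx R J).obj T).homologyπ 0) h2).trans ?_
    refine (Category.assoc _ _ _).trans ?_
    refine (congrArg (((barCx R J).obj S).liftCycles (limToBar S) 1 (by simp) (limToBar_d S) ≫ ·)
      (HomologicalComplex.homologyπ_naturality ((barCx R J).map α) 0).symm).trans ?_
    exact (Category.assoc _ _ _).symm

instance (T : J ⥤ ModuleCat.{0} R) : IsIso (limToHom.app T) := by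
  have h1 : IsIso (((barCx R J).obj T).homologyπ 0) :=
    ((barCx R J).obj T).isIso_homologyπ _ 0 rfl (by simp)
  have h2 : IsIso (((barCx R J).obj T).liftCycles (limToBar T) 1 (by simp) (limToBar_d T)) := by
    have hk := (limToBar_exact T).fIsKernel
    have : ((barCx R J).obj T).liftCycles (limToBar T) 1 (by simp) (limToBar_d T) =
      (hk.conePointUniqueUpToIso (((barCx R J).obj T).cyclesIsKernel 0 1 (by simp))).hom := by
      rw [← cancel_mono (HomologicalComplex.iCycles _ 0)]
      have := hk.conePointUniqueUpToIso_hom_comp (((barCx R J).obj T).cyclesIsKernel 0 1 (by simp))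
        WalkingParallelPair.zero
      simp at this ⊢
      exact this.symm
    rw [this]
    infer_instance
  exact IsIso.comp_isIso' h2 h1

/-- degree zero -/
noncomputable def limIsoHom : (lim : (J ⥤ ModuleCat.{0} R) ⥤ ModuleCat.{0} R) ≅
    barCx R J ⋙ HomologicalComplex.homologyFunctor _ (ComplexShape.up ℕ) 0 :=
  haveI : IsIso (limToHom (R := R) (J := J)) := NatIso.isIso_of_isIso_app _
  asIso limToHom

end barPart2

open CategoryTheory CategoryTheory.Limits Opposite

section barPart3
variable {R : Type} [Ring R] {J : Type} [Category.{0} J]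

/-- coinduced functor -/
def coindB (T : J ⥤ ModuleCat.{0} R) : J ⥤ ModuleCat.{0} R where
  obj x := ModuleCat.of R (∀ (c : J) (_ : x ⟶ c), T.obj c)
  map {x y} v := ModuleCat.ofHom (LinearMap.pi fun c => LinearMap.pi fun u =>
    (LinearMap.proj (v ≫ u)) ∘ₗ (LinearMap.proj (φ := fun c : J => ((x ⟶ c) → T.obj c)) c))
  map_id x := by
    ext g c u
    change g c (𝟙 x ≫ u) = g c u
    rw [Category.id_comp]
  map_comp {x y z} v w := by
    ext g c u
    change g c ((v ≫ w) ≫ u) = g c (v ≫ (w ≫ u))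
    rw [Category.assoc]

/-- unit -/
def coindEta (T : J ⥤ ModuleCat.{0} R) : T ⟶ coindB T where
  app x := ModuleCat.ofHom (LinearMap.pi fun c => LinearMap.pi fun u => (T.map u).hom)
  naturality x y v := by
    ext z
    funext c u
    change T.map u (T.map v z) = T.map (v ≫ u) z
    simp

instance (T : J ⥤ ModuleCat.{0} R) : Mono (coindEta T) := by
  have : ∀ x, Mono ((coindEta T).app x) := fun x => by
    rw [ModuleCat.mono_iff_injective]
    intro a b hab
    have h := congrFun (congrFun (show (_ : ∀ (c : J) (_ : x ⟶ c), T.obj c) = _ from hab) x) (𝟙 x)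
    have h' : T.map (𝟙 x) a = T.map (𝟙 x) b := h
    simpa using h'
  exact NatTrans.mono_of_mono_app _

theorem face_zero_precomp {n : ℕ} (σ : ComposableArrows Jᵒᵖ n) {c : Jᵒᵖ} (a : c ⟶ σ.left) :
    face 0 (σ.precomp a) = σ :=
  rfl

theorem fin_functor_ext {m n : ℕ} (F G : Fin m ⥤ Fin n) (h : ∀ i, F.obj i = G.obj i) : F = G :=
  CategoryTheory.Functor.ext h (fun _ _ _ => Subsingleton.elim _ _)

theorem precomp_map_zero {n : ℕ} (σ : ComposableArrows Jᵒᵖ n) {c : Jᵒᵖ} (a : c ⟶ σ.left)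
    (k : Fin (n + 1)) (v : (0 : Fin (n + 2)) ⟶ k.succ) :
    (σ.precomp a).map v = (a ≫ σ.map (homOfLE (zero_le_len k)) : c ⟶ σ.obj k) := by
  obtain ⟨k, hk⟩ := k
  cases k with
  | zero =>
    have : σ.map (homOfLE (zero_le_len ⟨0, hk⟩)) = 𝟙 _ := σ.map_id _
    exact ((congrArg (a ≫ ·) this).trans (Category.comp_id _)).symm
  | succ k => rfl

theorem map_zero_transp {n : ℕ} (F : Fin (n + 1) ⥤ Jᵒᵖ) (m k : Fin (n + 1)) (hm : m = k)
    (v : 0 ⟶ m) : F.map v = F.map (homOfLE (zero_le_len k)) ≫ eqToHom (congrArg F.obj hm.symm) := by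
  subst hm
  exact (Category.comp_id _).symm

theorem face_succ_precomp {n : ℕ} (σ : ComposableArrows Jᵒᵖ (n + 1)) {c : Jᵒᵖ} (a : c ⟶ σ.left)
    (i : Fin (n + 2)) :
    face i.succ (σ.precomp a) = ComposableArrows.precomp (n := n) (face i σ)
      (a ≫ σ.map (homOfLE (zero_le_len (i.succAbove 0)))) := by
  have hF : (Fin.strictMono_succ (n := n + 1)).monotone.functor ⋙
      (Fin.strictMono_succAbove i.succ).monotone.functor =
      (Fin.strictMono_succAbove i).monotone.functor ⋙
      (Fin.strictMono_succ (n := n + 2)).monotone.functor :=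
    fin_functor_ext _ _ fun j => Fin.succ_succAbove_succ i j
  refine ComposableArrows.ext_succ rfl (congrArg (fun F => F ⋙ σ.precomp a) hF) ?_
  refine (map_zero_transp (σ.precomp a) _ (i.succAbove 0).succ (Fin.succ_succAbove_succ i 0)
    (homOfLE (zero_le_len _))).trans ?_
  refine Eq.trans ?_ (Category.id_comp _).symm
  exact congrArg (· ≫ eqToHom _) (precomp_map_zero σ a (i.succAbove 0) _)

theorem BarX.transp {T : J ⥤ ModuleCat.{0} R} {n : ℕ} (f : BarX (coindB T) n)
    {σ τ : Fin (n + 1) ⥤ Jᵒᵖ} (h : σ = τ) (c : J) (u : unop (σ.obj 0) ⟶ c) :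
    (show ∀ (c : J) (_ : unop (σ.obj 0) ⟶ c), T.obj c from f σ) c u =
    (show ∀ (c : J) (_ : unop (τ.obj 0) ⟶ c), T.obj c from f τ) c (eqToHom (by rw [h]) ≫ u) := by
  subst h; simp

/-- evaluation of elements of coinduced modules -/
def evB {T : J ⥤ ModuleCat.{0} R} {x : J} (c : J) (u : x ⟶ c) :
    (coindB T).obj x →ₗ[R] T.obj c :=
  (LinearMap.proj u) ∘ₗ (LinearMap.proj (φ := fun c : J => ((x ⟶ c) → T.obj c)) c)

theorem evB_ext {T : J ⥤ ModuleCat.{0} R} {x : J} (a b : (coindB T).obj x)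
    (h : ∀ c (u : x ⟶ c), evB c u a = evB c u b) : a = b :=
  funext (f := (show ∀ (c : J) (_ : x ⟶ c), T.obj c from a))
    (g := (show ∀ (c : J) (_ : x ⟶ c), T.obj c from b))
    fun c => funext fun u => h c u

theorem evB_map {T : J ⥤ ModuleCat.{0} R} {x y : J} (v : x ⟶ y) (c : J) (u : y ⟶ c)
    (a : (coindB T).obj x) : evB c u ((coindB T).map v a) = evB c (v ≫ u) a := rfl

theorem evB_transp {T : J ⥤ ModuleCat.{0} R} {n : ℕ} (f : BarX (coindB T) n)
    {σ τ : Fin (n + 1) ⥤ Jᵒᵖ} (h : σ = τ) (c : J) (u : unop (σ.obj 0) ⟶ c) :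
    evB c u (f σ) = evB c (eqToHom (by rw [h]) ≫ u) (f τ) := by
  subst h; simp

/-- contracting homotopy -/
def barHtpy {T : J ⥤ ModuleCat.{0} R} {n : ℕ} (f : BarX (coindB T) (n + 1)) :
    BarX (coindB T) n := fun σ =>
  (show ∀ (c : J) (_ : unop (σ.obj 0) ⟶ c), T.obj c from
    fun c u => evB (x := c) c (𝟙 c) (f (ComposableArrows.precomp (n := n) σ (X := op c) u.op)))

theorem barHtpy_apply {T : J ⥤ ModuleCat.{0} R} {n : ℕ} (f : BarX (coindB T) (n + 1))
    (σ : Fin (n + 1) ⥤ Jᵒᵖ) (c : J) (u : unop (σ.obj 0) ⟶ c) :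
    evB c u (barHtpy f σ) =
    evB (x := c) c (𝟙 c) (f (ComposableArrows.precomp (n := n) σ (X := op c) u.op)) := rfl

theorem coind_acyclic_aux {T : J ⥤ ModuleCat.{0} R} {n : ℕ} (f : BarX (coindB T) (n + 1))
    (hf : (((barCx R J).obj (coindB T)).d (n + 1) (n + 2)).hom f = 0) :
    (((barCx R J).obj (coindB T)).d n (n + 1)).hom (barHtpy f) = f := by
  refine funext (f := (show BarX (coindB T) (n + 1) from _)) (g := f) fun σ => ?_
  refine (barCx_d (coindB T) n (barHtpy f) σ).trans ?_
  refine evB_ext _ _ fun c u => ?_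
  have h1 := (barCx_d (coindB T) (n + 1) f
    (ComposableArrows.precomp (n := n + 1) σ (X := op c) u.op)).symm.trans
    (congrFun (show (_ : BarX (coindB T) (n + 2)) = 0 from hf) _)
  have h2 := congrArg (evB (T := T) (x := c) c (𝟙 c)) h1
  have h3 := (map_sum (evB (T := T) (x := c) c (𝟙 c)) _ _).symm.trans h2
  rw [Fin.sum_univ_succ] at h3
  rw [map_sum]
  have hterm : ∀ i : Fin (n + 2),
      (evB (T := T) (x := c) c (𝟙 c)) ((-1 : ℤ) ^ (i.succ : ℕ) •
        (coindB T).map ((ComposableArrows.precomp (n := n + 1) σ (X := op c) u.op).map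
          (homOfLE (zero_le_len (i.succ.succAbove 0)))).unop
          (f (face i.succ (ComposableArrows.precomp (n := n + 1) σ (X := op c) u.op)))) =
      - evB c u ((-1 : ℤ) ^ (i : ℕ) • (coindB T).map
        (σ.map (homOfLE (zero_le_len (i.succAbove 0)))).unop (barHtpy f (face i σ))) := by
    intro i
    have e1 : (evB (T := T) (x := c) c (𝟙 c)) (
        (coindB T).map ((ComposableArrows.precomp (n := n + 1) σ (X := op c) u.op).map
          (homOfLE (zero_le_len (i.succ.succAbove 0)))).unop
          (f (face i.succ (ComposableArrows.precomp (n := n + 1) σ (X := op c) u.op)))) =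
      evB c u ((coindB T).map
        (σ.map (homOfLE (zero_le_len (i.succAbove 0)))).unop (barHtpy f (face i σ))) := by
      refine (evB_map _ _ _ _).trans ?_
      refine (evB_transp f (face_succ_precomp (n := n) σ (c := op c) u.op i) _ _).trans ?_
      refine Eq.trans ?_ (evB_map _ _ _ _).symm
      refine Eq.trans ?_ (barHtpy_apply _ _ _ _).symm
      refine congrArg (fun w : c ⟶ c => evB (T := T) (x := c) c w _) ?_
      refine (Category.id_comp _).trans ?_
      exact Category.id_comp _
    refine (map_zsmul _ _ _).trans ?_
    refine Eq.trans ?_ (congrArg Neg.neg (map_zsmul _ _ _).symm)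
    rw [← e1, Fin.val_succ, pow_succ, mul_neg_one, neg_smul]
  have hzero : (evB (T := T) (x := c) c (𝟙 c)) ((-1 : ℤ) ^ ((0 : Fin (n + 3)) : ℕ) •
        (coindB T).map ((ComposableArrows.precomp (n := n + 1) σ (X := op c) u.op).map
          (homOfLE (zero_le_len ((0 : Fin (n + 3)).succAbove 0)))).unop
          (f (face 0 (ComposableArrows.precomp (n := n + 1) σ (X := op c) u.op)))) =
      evB c u (f σ) := by
    refine (map_zsmul _ _ _).trans ?_
    refine (one_smul ℤ _).trans ?_
    refine (evB_map _ _ _ _).trans ?_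
    exact congrArg (fun w => evB (T := T) c w (f σ)) (Category.comp_id u)
  have h4 := (congrArg₂ (· + ·) hzero (Finset.sum_congr rfl fun i _ => hterm i)).symm.trans h3
  rw [Finset.sum_neg_distrib] at h4
  exact (add_neg_eq_zero.1 (h4.trans (map_zero _))).symm

theorem coind_acyclic (T : J ⥤ ModuleCat.{0} R) (n : ℕ) :
    IsZero (((barCx R J).obj (coindB T)).homology (n + 1)) := by
  rw [← HomologicalComplex.exactAt_iff_isZero_homology,
    HomologicalComplex.exactAt_iff' _ n (n + 1) (n + 2) (by simp) (by simp),
    ShortComplex.moduleCat_exact_iff]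
  intro f hf
  exact ⟨barHtpy (show BarX (coindB T) (n + 1) from f), coind_acyclic_aux _ hf⟩

theorem inj_acyclic (I : J ⥤ ModuleCat.{0} R) (hI : Injective I) (n : ℕ) :
    IsZero (((barCx R J).obj I).homology (n + 1)) := by
  let r : coindB I ⟶ I := Injective.factorThru (𝟙 I) (coindEta I)
  have hr : coindEta I ≫ r = 𝟙 I := Injective.comp_factorThru _ _
  let F := barCx R J ⋙ HomologicalComplex.homologyFunctor _ (ComplexShape.up ℕ) (n + 1)
  have h0 : IsZero (F.obj (coindB I)) := coind_acyclic I n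
  have h1 : 𝟙 (F.obj I) = 0 := by
    rw [← F.map_id, ← hr, F.map_comp, h0.eq_of_tgt (F.map (coindEta I)) 0, zero_comp]
  exact (IsZero.iff_id_eq_zero _).2 h1

end barPart3

open CategoryTheory CategoryTheory.Limits Opposite

section barPart4
variable {R : Type} [Ring R] {C : Type} [Category.{0} C]

/-- signs -/
def epsB : ℕ → ℤ
  | 0 => 1
  | n + 1 => epsB n * (-1) ^ (n + 1)

theorem epsB_mul_self (n : ℕ) : epsB n * epsB n = 1 := by
  induction n with
  | zero => rfl
  | succ n ih =>
    have : ((-1 : ℤ) ^ (n + 1)) * (-1) ^ (n + 1) = 1 := by rw [← mul_pow]; simp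
    calc epsB n * (-1) ^ (n + 1) * (epsB n * (-1) ^ (n + 1))
        = (epsB n * epsB n) * ((-1 : ℤ) ^ (n + 1) * (-1) ^ (n + 1)) := by ring
      _ = 1 := by rw [ih, this, one_mul]

/-- reversal -/
def revF (n : ℕ) : Fin (n + 1) ⥤ (Fin (n + 1))ᵒᵖ where
  obj i := op (Fin.rev i)
  map {i j} u := (homOfLE (Fin.rev_le_rev.2 (leOfHom u))).op

theorem finop_functor_ext {m n : ℕ} (F G : Fin m ⥤ (Fin n)ᵒᵖ) (h : ∀ i, F.obj i = G.obj i) :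
    F = G :=
  CategoryTheory.Functor.ext h (fun _ _ _ => Quiver.Hom.unop_inj (Subsingleton.elim _ _))

theorem finopop_functor_ext {m n : ℕ} (F G : Fin m ⥤ (Fin n)ᵒᵖᵒᵖ) (h : ∀ i, F.obj i = G.obj i) :
    F = G :=
  CategoryTheory.Functor.ext h
    (fun _ _ _ => Quiver.Hom.unop_inj (Quiver.Hom.unop_inj (Subsingleton.elim _ _)))

theorem revF_revF (n : ℕ) : revF n ⋙ (revF n).op = opOp _ :=
  finopop_functor_ext _ _ fun i => congrArg (fun j => op (op j)) (Fin.rev_rev i)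

theorem revF_face (n : ℕ) (i : Fin (n + 2)) :
    revF n ⋙ (Fin.strictMono_succAbove i).monotone.functor.op =
      (Fin.strictMono_succAbove i.rev).monotone.functor ⋙ revF (n + 1) :=
  finop_functor_ext _ _ fun j => congrArg op (by
    have h := Fin.rev_succAbove i.rev j
    rw [Fin.rev_rev] at h
    exact h.symm)

/-- reversal of simplices -/
def rSimp {n : ℕ} (σ : Fin (n + 1) ⥤ Cᵒᵖᵒᵖ) : Fin (n + 1) ⥤ Cᵒᵖ := revF n ⋙ σ.leftOp

/-- reversal of simplices -/
def rSimp' {n : ℕ} (ρ : Fin (n + 1) ⥤ Cᵒᵖ) : Fin (n + 1) ⥤ Cᵒᵖᵒᵖ := revF n ⋙ ρ.op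

theorem rSimp_bij (n : ℕ) : Function.Bijective (rSimp (C := C) (n := n)) := by
  refine Function.bijective_iff_has_inverse.2 ⟨rSimp', fun σ => ?_, fun ρ => ?_⟩
  · exact congrArg (fun F => F ⋙ σ.leftOp.op) (revF_revF n)
  · exact congrArg (fun F => F ⋙ ρ.op.leftOp) (revF_revF n)

variable (T : C ⥤ ModuleCat.{0} R) (h : ∀ {x y : C} (θ : x ⟶ y), IsIso (T.map θ))

theorem invF_isIso {x y : Cᵒᵖ} (θ : x ⟶ y) : IsIso ((invFunctor T h).map θ) := by
  have := h θ.unop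
  dsimp [invFunctor]
  infer_instance

theorem invF_cancel {x y : C} (θ : x ⟶ y) (z : T.obj x) :
    (show T.obj x from (invFunctor T h).map θ.op (show T.obj y from T.map θ z)) = z := by
  have := h θ
  have e : T.map θ ≫ (invFunctor T h).map θ.op = 𝟙 _ := IsIso.hom_inv_id (T.map θ)
  exact congrArg (fun φ => ModuleCat.Hom.hom φ z) e

theorem invF_bij {x y : Cᵒᵖ} (θ : x ⟶ y) :
    Function.Bijective ((invFunctor T h).map θ).hom := by
  have := invF_isIso T h θ
  exact ConcreteCategory.bijective_of_isIso ((invFunctor T h).map θ)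

/-- pulled-back value -/
noncomputable def revVal {n m : ℕ} (σ : Fin (n + 1) ⥤ Cᵒᵖᵒᵖ) (F : Fin (m + 1) ⥤ (Fin (n + 1))ᵒᵖ) :
    BarX T m →ₗ[R] (invFunctor T h).obj (unop (σ.obj 0)) :=
  ((invFunctor T h).map (σ.map (homOfLE (zero_le_len (unop (F.obj 0))))).unop).hom ∘ₗ
    (LinearMap.proj (φ := fun ρ : Fin (m + 1) ⥤ Cᵒᵖ => T.obj (unop (ρ.obj 0))) (F ⋙ σ.leftOp))

/-- reversal map -/
noncomputable def revMap (n : ℕ) : BarX T n →ₗ[R] BarX (invFunctor T h) n :=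
  LinearMap.pi fun σ => epsB n • revVal T h σ (revF n)

theorem revMap_apply (n : ℕ) (f : BarX T n) (σ : Fin (n + 1) ⥤ Cᵒᵖᵒᵖ) :
    revMap T h n f σ = epsB n • revVal T h σ (revF n) f := rfl

theorem revVal_apply {n m : ℕ} (σ : Fin (n + 1) ⥤ Cᵒᵖᵒᵖ) (F : Fin (m + 1) ⥤ (Fin (n + 1))ᵒᵖ)
    (f : BarX T m) : revVal T h σ F f =
    (invFunctor T h).map (σ.map (homOfLE (zero_le_len (unop (F.obj 0))))).unop
      (f (F ⋙ σ.leftOp)) := rfl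

theorem revMap_bij (n : ℕ) : Function.Bijective (revMap T h n) := by
  constructor
  · intro f g hfg
    funext ρ
    obtain ⟨σ, rfl⟩ := (rSimp_bij n).2 ρ
    have h1 := congrArg (epsB n • ·) (congrFun hfg σ)
    simp only [revMap_apply, smul_smul, epsB_mul_self, one_smul] at h1
    exact (invF_bij T h _).1 h1
  · intro g
    have h1 : ∀ σ : Fin (n + 1) ⥤ Cᵒᵖᵒᵖ, ∃ y : T.obj (unop ((rSimp σ).obj 0)),
        (invFunctor T h).map (σ.map (homOfLE (zero_le_len (unop ((revF n).obj 0))))).unop y =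
          epsB n • g σ := fun σ => (invF_bij T h _).2 _
    choose f hf using h1
    refine ⟨Equiv.piCongrLeft (fun ρ : Fin (n + 1) ⥤ Cᵒᵖ => (T.obj (unop (ρ.obj 0)) : Type))
      (Equiv.ofBijective _ (rSimp_bij n)) f, ?_⟩
    funext σ
    rw [revMap_apply]
    have h2 := Equiv.piCongrLeft_apply_apply
      (fun ρ : Fin (n + 1) ⥤ Cᵒᵖ => (T.obj (unop (ρ.obj 0)) : Type))
      (Equiv.ofBijective _ (rSimp_bij n)) f σ
    have h3 := (congrArg ((invFunctor T h).map
      (σ.map (homOfLE (zero_le_len (unop ((revF n).obj 0))))).unop).hom h2).trans (hf σ)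
    refine (congrArg (epsB n • ·) h3).trans ?_
    simp only [smul_smul, epsB_mul_self, one_smul]

theorem revMap_comm_term (n : ℕ) (f : BarX T n) (σ : Fin (n + 2) ⥤ Cᵒᵖᵒᵖ) (i : Fin (n + 2)) :
    (invFunctor T h).map (σ.map (homOfLE (zero_le_len (i.succAbove 0)))).unop
      (revVal T h (face i σ) (revF n) f) =
    (invFunctor T h).map (σ.map (homOfLE (zero_le_len (unop ((revF (n + 1)).obj 0))))).unop
      (T.map ((rSimp σ).map (homOfLE (zero_le_len (i.rev.succAbove 0)))).unop
        (f (face i.rev (rSimp σ)))) := by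
  have h1 : (invFunctor T h).map (σ.map (homOfLE (zero_le_len (i.succAbove 0)))).unop
      (revVal T h (face i σ) (revF n) f) =
      revVal T h σ (revF n ⋙ (Fin.strictMono_succAbove i).monotone.functor.op) f :=
    (map_thin (invFunctor T h) σ _ _ _ _).symm
  rw [h1, revF_face]
  refine (revVal_apply T h σ _ f).trans ?_
  refine Eq.symm ((map_thin (invFunctor T h) σ (j := Fin.rev (i.rev.succAbove 0))
    (homOfLE (zero_le_len _)) (homOfLE (Fin.rev_le_rev.2 (zero_le_len _))) _ _).trans ?_)
  exact congrArg ((invFunctor T h).map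
    (σ.map (homOfLE (zero_le_len (Fin.rev (i.rev.succAbove 0))))).unop).hom
    (invF_cancel T h ((rSimp σ).map (homOfLE (zero_le_len (i.rev.succAbove 0)))).unop
      (f (face i.rev (rSimp σ))))

theorem eps_sign (n : ℕ) (i : Fin (n + 2)) :
    (-1 : ℤ) ^ (i : ℕ) * epsB n = epsB (n + 1) * (-1) ^ (i.rev : ℕ) := by
  have h1 : (i : ℕ) + (i.rev : ℕ) = n + 1 := by rw [Fin.val_rev]; omega
  have h2 : ((-1 : ℤ) ^ (i.rev : ℕ)) * (-1) ^ (i.rev : ℕ) = 1 := by rw [← mul_pow]; simp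
  have h3 : epsB (n + 1) = epsB n * ((-1) ^ (i : ℕ) * (-1) ^ (i.rev : ℕ)) := by
    rw [← pow_add, h1]; rfl
  rw [h3, mul_assoc, mul_assoc, h2]; ring

theorem revMap_comm (n : ℕ) (f : BarX T n) :
    (((barCx R Cᵒᵖ).obj (invFunctor T h)).d n (n + 1)).hom (revMap T h n f) =
    revMap T h (n + 1) ((((barCx R C).obj T).d n (n + 1)).hom f) := by
  refine funext (f := (show BarX (invFunctor T h) (n + 1) from _))
    (g := (show BarX (invFunctor T h) (n + 1) from _)) fun σ => ?_
  refine (barCx_d (invFunctor T h) n (revMap T h n f) σ).trans ?_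
  have h1 := congrArg ((invFunctor T h).map
    (σ.map (homOfLE (zero_le_len (unop ((revF (n + 1)).obj 0))))).unop).hom
    (barCx_d T n f (rSimp σ))
  refine Eq.symm ((congrArg (epsB (n + 1) • ·) h1).trans ?_)
  refine (congrArg (fun z => epsB (n + 1) • ((invFunctor T h).map
    (σ.map (homOfLE (zero_le_len (unop ((revF (n + 1)).obj 0))))).unop).hom z)
    (Equiv.sum_comp Fin.revPerm _).symm).trans ?_
  refine (congrArg (epsB (n + 1) • ·) (map_sum _ _ _)).trans ?_
  refine Finset.smul_sum.trans ?_
  refine Finset.sum_congr rfl fun i _ => ?_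
  refine Eq.trans (congrArg (epsB (n + 1) • ·) (map_zsmul _ _ _)) ?_
  refine (smul_smul _ _ _).trans ?_
  refine Eq.symm ?_
  refine (congrArg ((-1 : ℤ) ^ (i : ℕ) • ·) (map_zsmul ((invFunctor T h).map
    (σ.map (homOfLE (zero_le_len (i.succAbove 0)))).unop).hom (epsB n) _)).trans ?_
  refine (smul_smul _ _ _).trans ?_
  exact congrArg₂ (fun (c : ℤ) (x : (invFunctor T h).obj (unop (σ.obj 0))) => c • x)
    (eps_sign n i) (revMap_comm_term T h n f σ i)

/-- reversal isomorphism -/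
noncomputable def revIso :
    (barCx R C).obj T ≅ (barCx R Cᵒᵖ).obj (invFunctor T h) :=
  HomologicalComplex.Hom.isoOfComponents
    (fun n => (LinearEquiv.ofBijective (revMap T h n) (revMap_bij T h n)).toModuleIso)
    (fun i j hij => by
      obtain rfl : i + 1 = j := hij
      ext f
      exact revMap_comm T h i f)

theorem main_aux [EnoughInjectives (C ⥤ ModuleCat.{0} R)]
    [EnoughInjectives (Cᵒᵖ ⥤ ModuleCat.{0} R)] (n : ℕ) :
    Nonempty
      ((((Limits.lim (J := C) (C := ModuleCat.{0} R)).rightDerived n).obj T) ≅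
        (((Limits.lim (J := Cᵒᵖ) (C := ModuleCat.{0} R)).rightDerived n).obj
          (invFunctor T h))) := by
  obtain ⟨e1⟩ := rightDerived_iso_homology (Limits.lim (J := C) (C := ModuleCat.{0} R))
    (barCx R C) barCx_shortExact limIsoHom (fun I hI n => inj_acyclic I hI n) T n
  obtain ⟨e2⟩ := rightDerived_iso_homology (Limits.lim (J := Cᵒᵖ) (C := ModuleCat.{0} R))
    (barCx R Cᵒᵖ) barCx_shortExact limIsoHom (fun I hI n => inj_acyclic I hI n)
    (invFunctor T h) n
  exact ⟨e1 ≪≫ (HomologicalComplex.homologyFunctor _ (ComplexShape.up ℕ) n).mapIso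
    (revIso T h) ≪≫ e2.symm⟩

end barPart4


theorem stmt_12 {R : Type} [Ring R] (X : SSet.{0}) (T : SimplexCat X ⥤ ModuleCat.{0} R)
    (h : ∀ {x y : SimplexCat X} (θ : x ⟶ y), IsIso (T.map θ))
    [EnoughInjectives (SimplexCat X ⥤ ModuleCat.{0} R)]
    [EnoughInjectives ((SimplexCat X)ᵒᵖ ⥤ ModuleCat.{0} R)] (n : ℕ) :
    Nonempty
      ((((Limits.lim (J := SimplexCat X) (C := ModuleCat.{0} R)).rightDerived n).obj T) ≅
        (((Limits.lim (J := (SimplexCat X)ᵒᵖ) (C := ModuleCat.{0} R)).rightDerived n).obj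
          (invFunctor T h))) := by
  exact main_aux T h n
end

section
/- Let X be a simplicial set, R a ring, and T : (Δ/X)ᵒᵖ ⥤ Mod R a contravariant local system, i.e. a functor sending every morphism of (Δ/X)ᵒᵖ to an isomorphism. Let T^{-1} : Δ/X ⥤ Mod R be the functor with T^{-1}(x) = T(x) on objects and T^{-1}(θ) = (T(θ))^{-1} on morphisms. Then for every n ≥ 0 there is an isomorphism between the n-th left derived functor of the colimit over (Δ/X)ᵒᵖ applied to T and the n-th left derived functor of the colimit over Δ/X applied to T^{-1}: colim_n^{(Δ/X)ᵒᵖ} T ≅ colim_n^{Δ/X} T^{-1}; equivalently, H_n^{GZ}(X, T) ≅ H_n(Δ/X, T^{-1}). -/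
/-!
STATEMENT 13: For a simplicial set `X`, a ring `R` and a contravariant local system
`T : (Δ/X)ᵒᵖ ⥤ Mod R` (a functor inverting all morphisms), with inverse covariant system
`T⁻¹ : Δ/X ⥤ Mod R`, the `n`-th left derived functor of the colimit over `(Δ/X)ᵒᵖ`
applied to `T` is isomorphic to the `n`-th left derived functor of the colimit over
`Δ/X` applied to `T⁻¹`:  `colim_n^{(Δ/X)ᵒᵖ} T ≅ colim_n^{Δ/X} T⁻¹`.
-/

open CategoryTheory CategoryTheory.Limits Opposite

/-- The inverse of a functor `Cᵒᵖ ⥤ 𝒜` inverting all morphisms: it has the same values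
on objects, and sends a morphism `θ` to `(T(θ))⁻¹`. -/
noncomputable def invFunctorOp {C : Type*} [Category C] {𝒜 : Type*} [Category 𝒜]
    (T : Cᵒᵖ ⥤ 𝒜) (h : ∀ {x y : Cᵒᵖ} (θ : x ⟶ y), IsIso (T.map θ)) : C ⥤ 𝒜 where
  obj x := T.obj (op x)
  map {x y} θ := haveI := h θ.op; inv (T.map θ.op)
  map_id x := by simp
  map_comp {x y z} θ θ' := by
    haveI := h θ.op; haveI := h θ'.op; haveI := h (θ ≫ θ').op
    dsimp
    apply IsIso.inv_eq_of_hom_inv_id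
    rw [T.map_comp]
    simp

universe v₁ u₁ v₂ u₂ v₃ u₃

namespace LocSys

section general
variable {A : Type u₁} [Category.{v₁} A] [Abelian A]
  {B : Type u₂} [Category.{v₂} B] [Abelian B]
  {D : Type u₃} [Category.{v₃} D] [Abelian D]

theorem mapRes_w (F : A ⥤ B) [F.Additive] {X : A} (P : ProjectiveResolution X) :
    F.map (P.complex.d 1 0) ≫ F.map (P.π.f 0) = 0 :=
  (F.map_comp _ _).symm.trans ((congrArg F.map P.complex_d_comp_π_f_zero).trans (F.map_zero _ _))

/-- A projective resolution mapped by a right exact functor acyclic at the object. -/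
noncomputable def mapRes [HasProjectiveResolutions A] (F : A ⥤ B) [F.Additive] [PreservesFiniteColimits F]
    (hF : ∀ P : A, Projective P → Projective (F.obj P)) (X : A)
    (hX : ∀ i : ℕ, IsZero ((F.leftDerived (i + 1)).obj X)) (P : ProjectiveResolution X) :
    ProjectiveResolution (F.obj X) where
  complex := (F.mapHomologicalComplex _).obj P.complex
  projective n := hF _ (P.projective n)
  π := (ChainComplex.toSingle₀Equiv _ _).symm ⟨F.map (P.π.f 0), mapRes_w F P⟩
  quasiIso := ⟨fun n => by
    cases n with
    | zero =>
      rw [ChainComplex.quasiIsoAt₀_iff, ShortComplex.quasiIso_iff_of_zeros']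
      · have := (ShortComplex.exact_and_epi_g_iff_g_is_cokernel
          (S := ShortComplex.mk (F.map (P.complex.d 1 0)) (F.map (P.π.f 0))
            (mapRes_w F P))).2
            ⟨CokernelCofork.mapIsColimit _ (P.isColimitCokernelCofork) F⟩
        refine (ShortComplex.exact_and_epi_g_iff_of_iso ?_).2 this
        exact ShortComplex.isoMk (Iso.refl _) (Iso.refl _) (Iso.refl _)
          ((Category.id_comp _).trans (Category.comp_id _).symm)
          ((Category.id_comp _).trans (Eq.trans (ChainComplex.toSingle₀Equiv_symm_apply_f_zero
            (C := (F.mapHomologicalComplex _).obj P.complex) (X := F.obj X)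
            (F.map (P.π.f 0)) (mapRes_w F P)).symm
            (Category.comp_id _).symm))
      · exact (congrArg F.map (P.complex.shape 0 0 (by simp))).trans (F.map_zero _ _)
      all_goals rfl
    | succ n =>
      rw [quasiIsoAt_iff_exactAt']
      · rw [HomologicalComplex.exactAt_iff_isZero_homology]
        exact (hX n).of_iso (P.isoLeftDerivedObj F (n+1)).symm
      · apply ChainComplex.exactAt_succ_single_obj⟩

theorem derComp [HasProjectiveResolutions A] [HasProjectiveResolutions B]
    (F : A ⥤ B) [F.Additive] [PreservesFiniteColimits F]
    (hF : ∀ P : A, Projective P → Projective (F.obj P)) (X : A)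
    (hX : ∀ i : ℕ, IsZero ((F.leftDerived (i + 1)).obj X))
    (G : B ⥤ D) [G.Additive] (H : A ⥤ D) [H.Additive] (e : F ⋙ G ≅ H) (n : ℕ) :
    Nonempty ((H.leftDerived n).obj X ≅ (G.leftDerived n).obj (F.obj X)) := by
  let P := projectiveResolution X
  refine ⟨P.isoLeftDerivedObj H n ≪≫ ?_ ≪≫
    ((mapRes F hF X hX P).isoLeftDerivedObj G n).symm⟩
  refine (HomologicalComplex.homologyFunctor _ _ n).mapIso ?_
  exact ((NatIso.mapHomologicalComplex e _).app P.complex).symm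

theorem exactDer [HasProjectiveResolutions A] (F : A ⥤ B) [F.Additive] [F.PreservesHomology] (X : A) (i : ℕ) :
    IsZero ((F.leftDerived (i + 1)).obj X) := by
  let P := projectiveResolution X
  refine IsZero.of_iso ?_ (P.isoLeftDerivedObj F (i+1))
  have := (P.complex_exactAt_succ i).map F
  exact (HomologicalComplex.exactAt_iff_isZero_homology _ _).1 this

/-- exact functor after. -/
theorem derExactAfter [HasProjectiveResolutions A] (F : A ⥤ B) [F.Additive]
    (G : B ⥤ D) [G.Additive] [G.PreservesHomology] (H : A ⥤ D) [H.Additive] (e : F ⋙ G ≅ H) (X : A) (n : ℕ) :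
    Nonempty ((H.leftDerived n).obj X ≅ G.obj ((F.leftDerived n).obj X)) := by
  let P := projectiveResolution X
  refine ⟨P.isoLeftDerivedObj H n ≪≫ ?_ ≪≫ G.mapIso
    (P.isoLeftDerivedObj F n).symm⟩
  refine (HomologicalComplex.homologyFunctor _ _ n).mapIso
    ((NatIso.mapHomologicalComplex e _).app P.complex).symm ≪≫ ?_
  exact (((F.mapHomologicalComplex _).obj P.complex).sc n).mapHomologyIso G

end general

section
variable {J : Type} [SmallCategory J] {A : Type u₁} [Category.{0} A] [Abelian A] [HasColimits A]


/-- the standard projective cover -/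
noncomputable abbrev covObj [EnoughProjectives A] (S : J ⥤ A) : J ⥤ A :=
  ∐ fun x : J => (evaluationLeftAdjoint A x).obj (Projective.over (S.obj x))

/-- the standard projective cover map -/
noncomputable abbrev covMap [EnoughProjectives A] (S : J ⥤ A) : covObj S ⟶ S :=
  Sigma.desc fun x => ((evaluationAdjunctionRight A x).homEquiv _ _).symm (Projective.π (S.obj x))

instance covProj [EnoughProjectives A] (S : J ⥤ A) : Projective (covObj S) := by
  have : ∀ x : J, Projective ((evaluationLeftAdjoint A x).obj (Projective.over (S.obj x))) :=
    fun x => (evaluationAdjunctionRight A x).map_projective _ inferInstance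
  infer_instance

instance covEpi [EnoughProjectives A] (S : J ⥤ A) : Epi (covMap S) := by
  apply +allowSynthFailures NatTrans.epi_of_epi_app
  intro x
  have h : ((evaluationAdjunctionRight A x).homEquiv _ _) (Sigma.ι (fun x : J =>
      (evaluationLeftAdjoint A x).obj (Projective.over (S.obj x))) x ≫ covMap S) =
      Projective.π (S.obj x) := by
    rw [Sigma.ι_desc, Equiv.apply_symm_apply]
  rw [Adjunction.homEquiv_unit, Functor.map_comp, ← Category.assoc] at h
  have h2 : Epi (Projective.π (S.obj x)) := inferInstance
  rw [← h] at h2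
  exact @epi_of_epi _ _ _ _ _ _ (((evaluation J A).obj x).map (covMap S)) h2

theorem enoughProj [EnoughProjectives A] : EnoughProjectives (J ⥤ A) where
  presentation S := ⟨{ p := _, f := covMap S }⟩

theorem evalProj [EnoughProjectives A] (x : J) (P : J ⥤ A) (hP : Projective P) :
    Projective (P.obj x) := by
  have r : Retract P (covObj P) :=
    ⟨Projective.factorThru (𝟙 P) (covMap P), covMap P, Projective.factorThru_comp _ _⟩
  have h : Projective (((evaluation J A).obj x).obj (covObj P)) := by
    refine Projective.of_iso (PreservesCoproduct.iso ((evaluation J A).obj x) _).symm ?_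
    have : ∀ y : J, Projective (((evaluation J A).obj x).obj
      ((evaluationLeftAdjoint A y).obj (Projective.over (P.obj y)))) := by
      intro y
      exact inferInstanceAs (Projective (∐ fun _ : y ⟶ x => Projective.over (P.obj y)))
    infer_instance
  exact (r.map ((evaluation J A).obj x)).projective

instance whAdd {B : Type u₂} [Category.{v₂} B] [Preadditive B] {A' : Type u₁} [Category.{v₁} A'] [Preadditive A']
    (F : A' ⥤ B) [F.Additive] :
    ((Functor.whiskeringRight J A' B).obj F).Additive where
  map_add {X Y f g} := by ext j; exact F.map_add

variable {R : Type} [Ring R] {K : Type} [SmallCategory K]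

instance (x : J) : PreservesFiniteLimits (evaluationLeftAdjoint (ModuleCat.{0} R) x) := by
  constructor
  intro I _ _
  apply preservesLimitsOfShape_of_evaluation
  intro y
  have : PreservesFiniteLimits (colim (J := Discrete (x ⟶ y)) (C := ModuleCat.{0} R)) := inferInstance
  have e : Functor.const (Discrete (x ⟶ y)) ⋙ colim (J := Discrete (x ⟶ y)) (C := ModuleCat.{0} R) ≅ evaluationLeftAdjoint (ModuleCat.{0} R) x ⋙ (evaluation J (ModuleCat R)).obj y :=
    NatIso.ofComponents (fun M => 
      IsColimit.coconePointsIsoOfNatIso (colimit.isColimit ((Functor.const (Discrete (x ⟶ y))).obj M))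
        (coproductIsCoproduct (fun _ : x ⟶ y => M)) (Discrete.natIso fun _ => Iso.refl _)) (by
      intro M N f
      apply colimit.hom_ext
      rintro ⟨j⟩
      refine Eq.trans (ι_colimMap_assoc _ _ _) ?_
      refine Eq.trans (congrArg (f ≫ ·) (colimit.ι_desc _ _)) ?_
      refine Eq.trans ?_ (colimit.ι_desc_assoc _ _ _).symm
      refine Eq.trans (congrArg (f ≫ ·) (Category.id_comp _)) ?_
      refine Eq.trans ?_ (congrArg (· ≫ _) (Category.id_comp _)).symm
      exact (Limits.Sigma.ι_desc (f := fun _ : x ⟶ y => M)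
        (fun h => f ≫ Sigma.ι (fun _ : x ⟶ y => N) h) j).symm)
  exact preservesLimitsOfShape_of_natIso e


instance (x : J) : (evaluationLeftAdjoint (ModuleCat.{0} R) x).IsLeftAdjoint :=
  (evaluationAdjunctionRight (ModuleCat.{0} R) x).isLeftAdjoint

instance (x : J) : (evaluationLeftAdjoint (ModuleCat.{0} R) x).Additive :=
  Functor.additive_of_preserves_binary_products _

/-- The colimit of a free functor. -/
noncomputable def colimFree (x : J) :
    evaluationLeftAdjoint (ModuleCat.{0} R) x ⋙ colim ≅ 𝟭 (ModuleCat.{0} R) :=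
  (((evaluationAdjunctionRight (ModuleCat.{0} R) x).comp colimConstAdj).ofNatIsoRight
    (Iso.refl _ : _ ≅ 𝟭 (ModuleCat.{0} R))).leftAdjointUniq Adjunction.id

theorem acyc [EnoughProjectives (J ⥤ ModuleCat.{0} R)] (x : J) (M : ModuleCat.{0} R) (i : ℕ) :
    IsZero ((colim.leftDerived (i+1)).obj ((evaluationLeftAdjoint (ModuleCat.{0} R) x).obj M)) := by
  obtain ⟨e⟩ := derComp (evaluationLeftAdjoint (ModuleCat.{0} R) x)
    (fun P hP => (evaluationAdjunctionRight (ModuleCat.{0} R) x).map_projective P hP) M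
    (exactDer _ M) colim (𝟭 _) (colimFree x) (i+1)
  exact (exactDer _ M i).of_iso e.symm

theorem acyc' [EnoughProjectives (J ⥤ ModuleCat.{0} R)] (x : J) (M : ModuleCat.{0} R)
    (V : J ⥤ ModuleCat.{0} R) (e : V ≅ (evaluationLeftAdjoint (ModuleCat.{0} R) x).obj M) (i : ℕ) :
    IsZero ((colim.leftDerived (i+1)).obj V) :=
  (acyc x M i).of_iso ((colim.leftDerived (i+1)).mapIso e)

theorem acycW [EnoughProjectives (K ⥤ ModuleCat.{0} R)]
    [EnoughProjectives (J ⥤ K ⥤ ModuleCat.{0} R)] (W : J ⥤ K ⥤ ModuleCat.{0} R)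
    (hW : ∀ j i, IsZero ((colim.leftDerived (i+1)).obj (W.obj j))) (i : ℕ) :
    IsZero ((((Functor.whiskeringRight J _ _).obj (colim (J := K) (C := ModuleCat.{0} R))).leftDerived (i+1)).obj W) := by
  apply (Functor.isZero_iff _).2
  intro j
  obtain ⟨e⟩ := derExactAfter ((Functor.whiskeringRight J _ _).obj (colim (J := K) (C := ModuleCat.{0} R)))
    ((evaluation J (ModuleCat.{0} R)).obj j) _ (Iso.refl _) W (i+1)
  obtain ⟨e'⟩ := derComp ((evaluation J (K ⥤ ModuleCat.{0} R)).obj j) (evalProj j) W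
    (exactDer _ W) colim _ (Iso.refl _) (i+1)
  exact (hW j i).of_iso (e.symm ≪≫ e')

theorem main1 [EnoughProjectives (K ⥤ ModuleCat.{0} R)] [EnoughProjectives (J ⥤ ModuleCat.{0} R)]
    [EnoughProjectives (J ⥤ K ⥤ ModuleCat.{0} R)] (W : J ⥤ K ⥤ ModuleCat.{0} R)
    (hW : ∀ j i, IsZero ((colim.leftDerived (i+1)).obj (W.obj j))) (n : ℕ) :
    Nonempty ((((Functor.whiskeringRight J _ _).obj (colim (J := K) (C := ModuleCat.{0} R)) ⋙
      colim (J := J) (C := ModuleCat.{0} R)).leftDerived n).obj W ≅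
      (colim.leftDerived n).obj (W ⋙ colim)) := by
  refine derComp ((Functor.whiskeringRight J _ _).obj (colim (J := K) (C := ModuleCat.{0} R)))
    (fun P hP => (colimConstAdj.whiskerRight J).map_projective P hP) W (acycW W hW) colim _ (Iso.refl _) n


theorem flipDer [EnoughProjectives (K ⥤ J ⥤ ModuleCat.{0} R)]
    [EnoughProjectives (J ⥤ K ⥤ ModuleCat.{0} R)] (W : J ⥤ K ⥤ ModuleCat.{0} R) (n : ℕ) :
    Nonempty ((((Functor.whiskeringRight J _ _).obj (colim (J := K) (C := ModuleCat.{0} R)) ⋙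
      colim (J := J) (C := ModuleCat.{0} R)).leftDerived n).obj W ≅
      (((Functor.whiskeringRight K _ _).obj (colim (J := J) (C := ModuleCat.{0} R)) ⋙
      colim (J := K) (C := ModuleCat.{0} R)).leftDerived n).obj W.flip) := by
  let E : (J ⥤ K ⥤ ModuleCat.{0} R) ≌ (K ⥤ J ⥤ ModuleCat.{0} R) := Functor.flipping
  have : E.functor.Additive := Functor.additive_of_preserves_binary_products _
  refine derComp E.functor (fun P hP => (E.map_projective_iff P).2 hP) W (exactDer _ W) _ _ ?_ n
  exact (Functor.associator _ _ _).symm ≪≫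
    Functor.isoWhiskerRight (colimIsoFlipCompWhiskerColim (J := J) (K := K) (C := ModuleCat.{0} R)).symm _ ≪≫
    (preservesColimitNatIso (colim (J := K) (C := ModuleCat.{0} R)))

theorem main2 [EnoughProjectives (K ⥤ ModuleCat.{0} R)] [EnoughProjectives (J ⥤ ModuleCat.{0} R)]
    (W : J ⥤ K ⥤ ModuleCat.{0} R)
    (hW : ∀ j i, IsZero ((colim.leftDerived (i+1)).obj (W.obj j)))
    (hW' : ∀ j i, IsZero ((colim.leftDerived (i+1)).obj (W.flip.obj j)))
    (S : J ⥤ ModuleCat.{0} R) (S' : K ⥤ ModuleCat.{0} R) (e : W ⋙ colim ≅ S)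
    (e' : W.flip ⋙ colim ≅ S') (n : ℕ) :
    Nonempty ((colim.leftDerived n).obj S ≅ (colim.leftDerived n).obj S') := by
  have := enoughProj (J := J) (A := K ⥤ ModuleCat.{0} R)
  have := enoughProj (J := K) (A := J ⥤ ModuleCat.{0} R)
  obtain ⟨a⟩ := main1 W hW n
  obtain ⟨b⟩ := main1 W.flip hW' n
  obtain ⟨c⟩ := flipDer W n
  exact ⟨(colim.leftDerived n).mapIso e.symm ≪≫ a.symm ≪≫ c ≪≫ b ≪≫ (colim.leftDerived n).mapIso e'⟩

end

section
variable {C : Type} [SmallCategory C] {R : Type} [Ring R]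
  (T' : C ⥤ ModuleCat.{0} R)

/-- The object `∐_{a ⟶ b} T' b`. -/
noncomputable def Wo (b : C) (a : Cᵒᵖ) : ModuleCat.{0} R := ∐ fun _ : op b ⟶ a => T'.obj b

/-- The inclusion. -/
noncomputable def wι {b : C} {a : Cᵒᵖ} (h : op b ⟶ a) : T'.obj b ⟶ Wo T' b a :=
  Sigma.ι (fun _ : op b ⟶ a => T'.obj b) h

/-- The universal map. -/
noncomputable def wdesc {b : C} {a : Cᵒᵖ} {M : ModuleCat.{0} R} (k : (op b ⟶ a) → (T'.obj b ⟶ M)) :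
    Wo T' b a ⟶ M :=
  Limits.Sigma.desc (f := fun _ : op b ⟶ a => T'.obj b) k

@[simp]
theorem wι_desc {b : C} {a : Cᵒᵖ} {M : ModuleCat.{0} R} (k : (op b ⟶ a) → (T'.obj b ⟶ M))
    (h : op b ⟶ a) : wι T' h ≫ wdesc T' k = k h :=
  Limits.Sigma.ι_desc (f := fun _ : op b ⟶ a => T'.obj b) k h

@[simp]
theorem wι_desc_assoc {b : C} {a : Cᵒᵖ} {M N : ModuleCat.{0} R} (k : (op b ⟶ a) → (T'.obj b ⟶ M))
    (h : op b ⟶ a) (q : M ⟶ N) : wι T' h ≫ wdesc T' k ≫ q = k h ≫ q := by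
  rw [← Category.assoc, wι_desc]

theorem w_ext {b : C} {a : Cᵒᵖ} {M : ModuleCat.{0} R} {p q : Wo T' b a ⟶ M}
    (h : ∀ k, wι T' k ≫ p = wι T' k ≫ q) : p = q :=
  Limits.Sigma.hom_ext (f := fun _ : op b ⟶ a => T'.obj b) p q h

/-- The bifunctor `(b, a) ↦ ∐_{a ⟶ b} T' b`. -/
noncomputable def W : C ⥤ Cᵒᵖ ⥤ ModuleCat.{0} R where
  obj b :=
    { obj := fun a => Wo T' b a
      map := fun g => wdesc T' fun h => wι T' (h ≫ g)
      map_id := fun a => by apply w_ext; intro k; simp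
      map_comp := fun f g => by apply w_ext; intro k; simp }
  map {b b'} f :=
    { app := fun a => wdesc T' fun g => T'.map f ≫ wι T' (f.op ≫ g)
      naturality := by
        intro a a' g
        apply w_ext
        intro h
        simp }
  map_id b := by
    ext1; funext a; apply w_ext; intro k; simp
  map_comp f g := by
    ext1; funext a; apply w_ext; intro k; simp

/-- The inclusion. -/
noncomputable def Wι {b : C} {a : Cᵒᵖ} (h : op b ⟶ a) : T'.obj b ⟶ ((W T').obj b).obj a :=
  wι T' h

/-- The universal map. -/
noncomputable def Wdesc {b : C} {a : Cᵒᵖ} {M : ModuleCat.{0} R} (k : (op b ⟶ a) → (T'.obj b ⟶ M)) :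
    ((W T').obj b).obj a ⟶ M :=
  wdesc T' k

@[simp]
theorem Wι_desc {b : C} {a : Cᵒᵖ} {M : ModuleCat.{0} R} (k : (op b ⟶ a) → (T'.obj b ⟶ M))
    (h : op b ⟶ a) : Wι T' h ≫ Wdesc T' k = k h := wι_desc T' k h

@[simp]
theorem Wι_desc_assoc {b : C} {a : Cᵒᵖ} {M N : ModuleCat.{0} R} (k : (op b ⟶ a) → (T'.obj b ⟶ M))
    (h : op b ⟶ a) (q : M ⟶ N) : Wι T' h ≫ Wdesc T' k ≫ q = k h ≫ q := by
  rw [← Category.assoc, Wι_desc]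

theorem W_ext {b : C} {a : Cᵒᵖ} {M : ModuleCat.{0} R} {p q : ((W T').obj b).obj a ⟶ M}
    (h : ∀ k, Wι T' k ≫ p = Wι T' k ≫ q) : p = q :=
  w_ext T' h

@[simp]
theorem W_comm1 {b : C} {a a' : Cᵒᵖ} (g : a ⟶ a') (h : op b ⟶ a) :
    Wι T' h ≫ ((W T').obj b).map g = Wι T' (h ≫ g) :=
  wι_desc _ _ _

@[simp]
theorem W_comm1_assoc {b : C} {a a' : Cᵒᵖ} (g : a ⟶ a') (h : op b ⟶ a) {M : ModuleCat.{0} R}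
    (q : _ ⟶ M) :
    Wι T' h ≫ ((W T').obj b).map g ≫ q = Wι T' (h ≫ g) ≫ q := by
  rw [← Category.assoc, W_comm1]

@[simp]
theorem W_comm2 {b b' : C} {a : Cᵒᵖ} (f : b ⟶ b') (h : op b ⟶ a) :
    Wι T' h ≫ ((W T').map f).app a = T'.map f ≫ Wι T' (f.op ≫ h) :=
  wι_desc _ _ _

@[simp]
theorem W_comm2_assoc {b b' : C} {a : Cᵒᵖ} (f : b ⟶ b') (h : op b ⟶ a) {M : ModuleCat.{0} R}
    (q : _ ⟶ M) :
    Wι T' h ≫ ((W T').map f).app a ≫ q = T'.map f ≫ Wι T' (f.op ≫ h) ≫ q := by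
  rw [← Category.assoc, W_comm2, Category.assoc]

/-- First identification. -/
noncomputable def W_iso1 (b : C) :
    (W T').obj b ≅ (evaluationLeftAdjoint (ModuleCat.{0} R) (op b)).obj (T'.obj b) :=
  NatIso.ofComponents (fun _ => Iso.refl _) (fun g =>
    (Category.comp_id _).trans (Category.id_comp _).symm)

/-- The first cocone. -/
noncomputable def cocone1 (b : C) : Cocone ((W T').obj b) where
  pt := T'.obj b
  ι :=
    { app := fun a => Wdesc T' fun _ => 𝟙 _
      naturality := by
        intro a a' g
        apply W_ext
        intro k
        simp }

/-- The first cocone is a colimit. -/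
noncomputable def isColimit1 (b : C) : IsColimit (cocone1 T' b) where
  desc s := Wι T' (𝟙 (op b)) ≫ s.ι.app (op b)
  fac s a := by
    apply W_ext
    intro k
    have := s.w k
    refine (Wι_desc_assoc _ _ _ _).trans ?_
    refine (Category.id_comp _).trans ?_
    rw [← this]
    refine (W_comm1_assoc _ _ _ _).trans ?_
    exact congrArg (fun q => Wι T' q ≫ s.ι.app a) (Category.id_comp k)
  uniq s m hm := by
    rw [← hm (op b)]
    symm
    exact (Wι_desc_assoc _ _ _ _).trans (Category.id_comp _)

/-- First colimit. -/
noncomputable def colim1 : W T' ⋙ colim ≅ T' :=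
  NatIso.ofComponents (fun b => (colimit.isColimit ((W T').obj b)).coconePointUniqueUpToIso
    (isColimit1 T' b)) (by
      intro b b' f
      apply colimit.hom_ext
      intro a
      refine Eq.trans (ι_colimMap_assoc _ _ _) ?_
      refine Eq.trans (congrArg (_ ≫ ·) (colimit.comp_coconePointUniqueUpToIso_hom _ _)) ?_
      refine Eq.trans ?_ (colimit.comp_coconePointUniqueUpToIso_hom_assoc _ _ _).symm
      apply W_ext
      intro k
      simp [cocone1])

variable {T'} {T : Cᵒᵖ ⥤ ModuleCat.{0} R} (α : ∀ b, T'.obj b ≅ T.obj (op b))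

/-- Second comparison. -/
noncomputable def W_isoApp (h1 : ∀ {b b' : C} (f : b ⟶ b'), T'.map f ≫ (α b').hom ≫ T.map f.op = (α b).hom)
    (h2 : ∀ {b b' : C} (f : b ⟶ b'), T.map f.op ≫ (α b).inv ≫ T'.map f = (α b').inv)
    (a : Cᵒᵖ) (b : C) :
    ((W T').obj b).obj a ≅ (∐ fun _ : a.unop ⟶ b => T.obj a) where
  hom := Wdesc T' fun k => ((α b).hom ≫ T.map k) ≫ Sigma.ι (fun _ : a.unop ⟶ b => T.obj a) k.unop
  inv := Limits.Sigma.desc fun f => (α a.unop).inv ≫ T'.map f ≫ Wι T' f.op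
  hom_inv_id := by
    apply W_ext
    intro k
    have := h2 k.unop
    simp only [Wι_desc_assoc, Category.assoc, Category.comp_id]
    rw [Limits.Sigma.ι_desc]
    calc _ = (α b).hom ≫ (T.map k ≫ (α a.unop).inv ≫ T'.map k.unop) ≫ Wι T' k := by
            simp only [Category.assoc]; rfl
      _ = _ := by
        rw [show T.map k ≫ (α a.unop).inv ≫ T'.map k.unop = _ from this]
        simp
  inv_hom_id := by
    apply Limits.Sigma.hom_ext
    intro f
    rw [Limits.Sigma.ι_desc_assoc, Category.comp_id]
    simp only [Category.assoc, Wι_desc]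
    calc _ = (α a.unop).inv ≫ (T'.map f ≫ (α b).hom ≫ T.map f.op) ≫ 
            Sigma.ι (fun _ : a.unop ⟶ b => T.obj a) f := by
            simp only [Category.assoc]; rfl
      _ = _ := by
        rw [h1 f]
        exact Iso.inv_hom_id_assoc _ _

/-- Second identification. -/
noncomputable def W_iso2 (h1 : ∀ {b b' : C} (f : b ⟶ b'), T'.map f ≫ (α b').hom ≫ T.map f.op = (α b).hom)
    (h2 : ∀ {b b' : C} (f : b ⟶ b'), T.map f.op ≫ (α b).inv ≫ T'.map f = (α b').inv)
    (a : Cᵒᵖ) :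
    (W T').flip.obj a ≅ (evaluationLeftAdjoint (ModuleCat.{0} R) a.unop).obj (T.obj a) :=
  NatIso.ofComponents (fun b => W_isoApp α h1 h2 a b) (by
    intro b b' f
    apply W_ext
    intro k
    refine (W_comm2_assoc _ _ _ _).trans ?_
    refine Eq.trans ?_ (Wι_desc_assoc _ _ _ _).symm
    refine (congrArg (T'.map f ≫ ·) (Wι_desc _ _ _)).trans ?_
    refine Eq.trans ?_ (Category.assoc _ _ _).symm
    refine Eq.trans ?_ (congrArg (((α b).hom ≫ T.map k) ≫ ·) (Limits.Sigma.ι_desc 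
      (f := fun _ : a.unop ⟶ b => T.obj a) _ k.unop).symm)
    have := h1 f
    rw [← this]
    simp
    exact Eq.symm ((Category.assoc _ _ _).trans (congrArg _ ((Category.assoc _ _ _).trans
      (congrArg _ (Category.assoc _ _ _))))))

/-- The second cocone. -/
noncomputable def cocone2 (h1 : ∀ {b b' : C} (f : b ⟶ b'), T'.map f ≫ (α b').hom ≫ T.map f.op = (α b).hom)
    (a : Cᵒᵖ) : Cocone ((W T').flip.obj a) where
  pt := T.obj a
  ι :=
    { app := fun b => Wdesc T' fun k => (α b).hom ≫ T.map k
      naturality := by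
        intro b b' f
        apply W_ext
        intro k
        refine (W_comm2_assoc _ _ _ _).trans ?_
        simp [reassoc_of% (h1 f)] }

/-- The second cocone is a colimit. -/
noncomputable def isColimit2 (h1 : ∀ {b b' : C} (f : b ⟶ b'), T'.map f ≫ (α b').hom ≫ T.map f.op = (α b).hom)
    (h2 : ∀ {b b' : C} (f : b ⟶ b'), T.map f.op ≫ (α b).inv ≫ T'.map f = (α b').inv)
    (a : Cᵒᵖ) : IsColimit (cocone2 α h1 a) where
  desc s := (α a.unop).inv ≫ Wι T' (𝟙 a) ≫ s.ι.app a.unop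
  fac s b := by
    apply W_ext
    intro k
    refine (Wι_desc_assoc _ _ _ _).trans ?_
    have e1 : T.map k ≫ (α a.unop).inv ≫ T'.map k.unop = (α b).inv := h2 k.unop
    have e2 : T'.map k.unop ≫ Wι T' k ≫ s.ι.app b = Wι T' (𝟙 a) ≫ s.ι.app a.unop := by
      rw [← s.w k.unop]
      refine Eq.symm ((W_comm2_assoc _ _ _ _).trans ?_)
      congr 2
      exact congrArg _ (Category.comp_id _)
    rw [← e2]
    refine Eq.trans (b := (α b).hom ≫ (T.map k ≫ (α a.unop).inv ≫ T'.map k.unop) ≫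
      Wι T' k ≫ s.ι.app b) ?_ ?_
    · simp only [Category.assoc]
      exact Category.assoc _ _ _
    · rw [e1]
      exact Iso.hom_inv_id_assoc _ _
  uniq s m hm := by
    rw [← hm a.unop]
    symm
    refine (congrArg ((α a.unop).inv ≫ ·) (Wι_desc_assoc _ _ _ _)).trans ?_
    simp
    exact Iso.inv_hom_id_assoc _ _

/-- Second colimit. -/
noncomputable def colim2 (h1 : ∀ {b b' : C} (f : b ⟶ b'), T'.map f ≫ (α b').hom ≫ T.map f.op = (α b).hom)
    (h2 : ∀ {b b' : C} (f : b ⟶ b'), T.map f.op ≫ (α b).inv ≫ T'.map f = (α b').inv) : 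
    (W T').flip ⋙ colim ≅ T :=
  NatIso.ofComponents (fun a => (colimit.isColimit ((W T').flip.obj a)).coconePointUniqueUpToIso
    (isColimit2 α h1 h2 a)) (by
      intro b b' f
      apply colimit.hom_ext
      intro a
      refine Eq.trans (ι_colimMap_assoc _ _ _) ?_
      refine Eq.trans (congrArg (_ ≫ ·) (colimit.comp_coconePointUniqueUpToIso_hom _ _)) ?_
      refine Eq.trans ?_ (colimit.comp_coconePointUniqueUpToIso_hom_assoc _ _ _).symm
      apply W_ext
      intro k
      refine (W_comm1_assoc _ _ _ _).trans ?_
      refine (Wι_desc _ _ _).trans ?_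
      refine Eq.trans ?_ (Wι_desc_assoc _ _ _ _).symm
      rw [T.map_comp]
      exact (Category.assoc _ _ _).symm)

theorem final [EnoughProjectives (Cᵒᵖ ⥤ ModuleCat.{0} R)] [EnoughProjectives (C ⥤ ModuleCat.{0} R)]
    (h1 : ∀ {b b' : C} (f : b ⟶ b'), T'.map f ≫ (α b').hom ≫ T.map f.op = (α b).hom)
    (h2 : ∀ {b b' : C} (f : b ⟶ b'), T.map f.op ≫ (α b).inv ≫ T'.map f = (α b').inv) (n : ℕ) :
    Nonempty ((colim.leftDerived n).obj T ≅ (colim.leftDerived n).obj T') := by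
  obtain ⟨e⟩ := main2 (W T') (fun j i => acyc' _ _ _ (W_iso1 T' j) i)
    (fun j i => acyc' _ _ _ (W_iso2 α h1 h2 j) i) T' T (colim1 T') (colim2 α h1 h2) n
  exact ⟨e.symm⟩

end
end LocSys

theorem stmt_13 {R : Type} [Ring R] (X : SSet.{0})
    (T : (SimplexCat X)ᵒᵖ ⥤ ModuleCat.{0} R)
    (h : ∀ {x y : (SimplexCat X)ᵒᵖ} (θ : x ⟶ y), IsIso (T.map θ))
    [EnoughProjectives ((SimplexCat X)ᵒᵖ ⥤ ModuleCat.{0} R)]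
    [EnoughProjectives (SimplexCat X ⥤ ModuleCat.{0} R)] (n : ℕ) :
    Nonempty
      ((((Limits.colim (J := (SimplexCat X)ᵒᵖ) (C := ModuleCat.{0} R)).leftDerived n).obj
          T) ≅
        (((Limits.colim (J := SimplexCat X) (C := ModuleCat.{0} R)).leftDerived n).obj
          (invFunctorOp T h))) := by
  refine LocSys.final (T := T) (T' := invFunctorOp T h) (fun b => Iso.refl _) ?_ ?_ n
  · intro b b' f
    haveI := h f.op
    exact (congrArg (inv (T.map f.op) ≫ ·) (Category.id_comp _)).trans (IsIso.inv_hom_id _)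
  · intro b b' f
    haveI := h f.op
    exact (congrArg (T.map f.op ≫ ·) (Category.id_comp _)).trans (IsIso.hom_inv_id _)
end
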